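/- arXiv:1611.02960 — 4 statements merged into one kernel-verified Lean document; each statement's English description precedes it below -/
import Mathlib

section
/- Let Z be a finite set, P a collection of probability mass functions on Z, f : P → ℝ, and ε, δ > 0. Suppose there exists an estimator f̂ : Z → ℝ such that for every p ∈ P, the probability under Z ~ p of the event |f(p) − f̂(Z)| > ε is less than δ. For each z ∈ Z let p_z ∈ P be a maximum-likelihood distribution, i.e., p_z(z) ≥ q(z) for all q ∈ P. Then for every p ∈ P, the probability under Z ~ p of the event |f(p) − f(p_z)| > 2ε is at most δ·|Z|. -/
open scoped Classical

/-!
An estimator with error probability less than `δ` cannot fail on an outcome of mass at least `δ`.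
If `p z ≥ δ`, the maximum-likelihood distribution `p_z` also gives `z` mass at least `δ`, so
`fhat z` is `ε`-close to both `f p` and `f p_z`, which are therefore `2ε`-close. Hence every outcome
on which the plug-in estimator fails has mass less than `δ`, and there are at most `|Z|` of them.
-/

section ErrorMass

variable {Z X : Type*} [Fintype Z] [PseudoMetricSpace X]

/-- The error probability at accuracy `ε` of the estimator `est` of the value `y`, when the outcome
has mass function `w`. The weights `w` need not sum to one. -/
noncomputable def errorMass (w : Z → ℝ) (y : X) (est : Z → X) (ε : ℝ) : ℝ :=
  ∑ z with ε < dist y (est z), w z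

variable {w : Z → ℝ} {y : X} {est : Z → X} {ε : ℝ}

lemma errorMass_nonneg (hw : ∀ z, 0 ≤ w z) : 0 ≤ errorMass w y est ε :=
  Finset.sum_nonneg fun z _ => hw z

lemma dist_le_of_errorMass_lt (hw : ∀ z, 0 ≤ w z) {z : Z} (hz : errorMass w y est ε < w z) :
    dist y (est z) ≤ ε := by
  by_contra! hfar
  have hle : w z ≤ errorMass w y est ε :=
    Finset.single_le_sum (fun i _ => hw i) (Finset.mem_filter.mpr ⟨Finset.mem_univ z, hfar⟩)
  exact hle.not_gt hz

lemma errorMass_le_mul_card {c : ℝ} (hc : 0 ≤ c) (h : ∀ z, ε < dist y (est z) → w z ≤ c) :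
    errorMass w y est ε ≤ c * Fintype.card Z :=
  calc errorMass w y est ε
      ≤ (Finset.univ.filter fun z => ε < dist y (est z)).card • c :=
        Finset.sum_le_card_nsmul _ _ _ fun z hz => h z (Finset.mem_filter.mp hz).2
    _ ≤ Fintype.card Z • c := nsmul_le_nsmul_left hc (Finset.card_le_univ _)
    _ = c * Fintype.card Z := by rw [nsmul_eq_mul, mul_comm]

end ErrorMass

theorem ml_plugin_estimation_general {Z Θ X : Type*} [Fintype Z] [PseudoMetricSpace X]
    (p : Θ → Z → ℝ) (hp : ∀ θ z, 0 ≤ p θ z) (f : Θ → X) (ε δ : ℝ) (fhat : Z → X)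
    (hest : ∀ θ, errorMass (p θ) (f θ) fhat ε < δ)
    (θml : Z → Θ) (hml : ∀ z θ, p θ z ≤ p (θml z) z) (θ : Θ) :
    errorMass (p θ) (f θ) (fun z => f (θml z)) (2 * ε) ≤ δ * Fintype.card Z := by
  have hδ : 0 ≤ δ := (errorMass_nonneg (hp θ)).trans (hest θ).le
  have fhat_close (θ' : Θ) (z : Z) (hz : δ ≤ p θ' z) : dist (f θ') (fhat z) ≤ ε :=
    dist_le_of_errorMass_lt (hp θ') ((hest θ').trans_le hz)
  refine errorMass_le_mul_card hδ fun z hfar => ?_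
  contrapose! hfar with hz
  calc dist (f θ) (f (θml z))
      ≤ dist (f θ) (fhat z) + dist (f (θml z)) (fhat z) := dist_triangle_right _ _ _
    _ ≤ ε + ε := add_le_add (fhat_close θ z hz.le) (fhat_close (θml z) z (hz.le.trans (hml z θ)))
    _ = 2 * ε := (two_mul ε).symm

/-- **Maximum-likelihood plug-in property estimation.** Let `Z` be a finite set, `P` a
collection of probability mass functions on `Z`, and `f` a property. If some estimator
`fhat` estimates `f` to accuracy `ε` with error probability `< δ` for every `p ∈ P`,
then the plug-in estimator based on a maximum-likelihood distribution `pml z`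
(satisfying `q z ≤ pml z z` for all `q ∈ P`) estimates `f` to accuracy `2ε` with error
probability at most `δ * |Z|`. -/
theorem ml_plugin_estimation {Z : Type*} [Fintype Z]
    (P : Set (Z → ℝ))
    (hP : ∀ p ∈ P, (∀ z, 0 ≤ p z) ∧ ∑ z, p z = 1)
    (f : (Z → ℝ) → ℝ) (ε δ : ℝ) (hε : 0 < ε) (hδ : 0 < δ)
    (fhat : Z → ℝ)
    (hest : ∀ p ∈ P, ∑ z ∈ Finset.univ.filter (fun z => ε < |f p - fhat z|), p z < δ)
    (pml : Z → (Z → ℝ))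
    (hpml_mem : ∀ z, pml z ∈ P)
    (hpml_max : ∀ z, ∀ q ∈ P, q z ≤ pml z z) :
    ∀ p ∈ P,
      ∑ z ∈ Finset.univ.filter (fun z => 2 * ε < |f p - f (pml z)|), p z
        ≤ δ * Fintype.card Z := by
  intro p hp
  exact ml_plugin_estimation_general (fun q : P => q.1) (fun q => (hP q q.2).1)
    (fun q => f q) ε δ fhat (fun q => hest q q.2) (fun z => ⟨pml z, hpml_mem z⟩)
    (fun z q => hpml_max z q q.2) ⟨p, hp⟩
end

section
/- Let Z be a finite set, P a collection of probability mass functions on Z, f : P → ℝ, ε, δ > 0, and 0 < β ≤ 1. Suppose there exists an estimator f̂ : Z → ℝ such that for every p ∈ P, the probability under Z ~ p of the event |f(p) − f̂(Z)| > ε is less than δ. For each z ∈ Z let p̃_z ∈ P be a β-approximate maximum-likelihood distribution, i.e., p̃_z(z) ≥ β·q(z) for all q ∈ P. Then for every p ∈ P, the probability under Z ~ p of the event |f(p) − f(p̃_z)| > 2ε is at most δ·|Z|/β. -/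
open scoped Classical

/-!
If the plug-in estimate at an outcome `z` is off by more than `2 * ε`, then by the triangle
inequality `fhat z` is off by more than `ε`, either as an estimate for the true distribution `p` or
as one for the approximate maximizer `ptil z`. The outcome `z` is then part of an error event of
mass at most `δ`, so `p z ≤ δ` in the first case and `β * p z ≤ ptil z z ≤ δ` in the second. Hence
each of the at most `|Z|` bad outcomes has `p`-mass at most `δ / β`.
-/

section ErrorProb

variable {Z M : Type*} [Fintype Z] [PseudoMetricSpace M]

/-- The error probability at accuracy `ε`: the mass that `p` gives to the outcomes `z` at which the
estimate `est z` is farther than `ε` from the true value `a`. The weights `p` need not sum to `1`,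
and the estimated quantity may lie in any pseudometric space `M`. -/
noncomputable def errorProb (p : Z → ℝ) (est : Z → M) (a : M) (ε : ℝ) : ℝ :=
  ∑ z with ε < dist a (est z), p z

variable {p : Z → ℝ} {est : Z → M} {a : M} {ε : ℝ}

theorem errorProb_nonneg (hp : 0 ≤ p) : 0 ≤ errorProb p est a ε :=
  Finset.sum_nonneg fun z _ => hp z

theorem apply_le_errorProb (hp : 0 ≤ p) {z : Z} (hz : ε < dist a (est z)) :
    p z ≤ errorProb p est a ε :=
  Finset.single_le_sum (fun i _ => hp i) (by simpa using hz)

theorem errorProb_le_mul_card {c : ℝ} (hc : 0 ≤ c)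
    (h : ∀ z, ε < dist a (est z) → p z ≤ c) : errorProb p est a ε ≤ c * Fintype.card Z :=
  calc
    errorProb p est a ε ≤ Finset.card {z | ε < dist a (est z)} • c :=
      Finset.sum_le_card_nsmul _ _ _ (by simpa using h)
    _ ≤ Fintype.card Z • c := nsmul_le_nsmul_left hc (Finset.card_le_univ _)
    _ = c * Fintype.card Z := by rw [nsmul_eq_mul, mul_comm]

end ErrorProb

theorem lt_dist_or_lt_dist_of_add_lt_dist {M : Type*} [PseudoMetricSpace M] {x y : M} {r s : ℝ}
    (h : r + s < dist x y) (c : M) : r < dist x c ∨ s < dist y c :=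
  lt_or_lt_of_add_lt_add (h.trans_le (dist_triangle_right x y c))

/-- `θ'` is a `β`-approximate maximum-likelihood parameter for the outcome `z` in the model `p`.
A collection of distributions is the model indexed by itself. -/
def IsApproxMaxLikelihood {Θ Z : Type*} (p : Θ → Z → ℝ) (β : ℝ) (z : Z) (θ' : Θ) : Prop :=
  ∀ θ, β * p θ z ≤ p θ' z

section PlugIn

variable {Θ Z M : Type*} [Fintype Z] [PseudoMetricSpace M] {p : Θ → Z → ℝ} {f : Θ → M}
  {est : Z → M} {ε δ β : ℝ}

theorem IsApproxMaxLikelihood.mul_le_of_two_mul_lt_dist (hp : ∀ θ, 0 ≤ p θ) (hβ : β ≤ 1)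
    (hest : ∀ θ, errorProb (p θ) est (f θ) ε ≤ δ) {z : Z} {θ' : Θ}
    (hθ' : IsApproxMaxLikelihood p β z θ') {θ : Θ} (hz : 2 * ε < dist (f θ) (f θ')) :
    β * p θ z ≤ δ := by
  have mass_le {η : Θ} (hη : ε < dist (f η) (est z)) : p η z ≤ δ :=
    (apply_le_errorProb (hp η) hη).trans (hest η)
  rw [two_mul] at hz
  rcases lt_dist_or_lt_dist_of_add_lt_dist hz (est z) with err_true | err_ml
  · exact (mul_le_of_le_one_left (hp θ z) hβ).trans (mass_le err_true)
  · exact (hθ' θ).trans (mass_le err_ml)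

theorem approx_ml_plugin_estimation_general (hp : ∀ θ, 0 ≤ p θ) (hβ0 : 0 < β) (hβ1 : β ≤ 1)
    (hest : ∀ θ, errorProb (p θ) est (f θ) ε ≤ δ) {ml : Z → Θ}
    (hml : ∀ z, IsApproxMaxLikelihood p β z (ml z)) (θ : Θ) :
    errorProb (p θ) (f ∘ ml) (f θ) (2 * ε) ≤ δ * Fintype.card Z / β := by
  have hδ : 0 ≤ δ := (errorProb_nonneg (hp θ)).trans (hest θ)
  rw [mul_div_right_comm]
  refine errorProb_le_mul_card (div_nonneg hδ hβ0.le) fun z hz => ?_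
  exact (le_div_iff₀' hβ0).2 ((hml z).mul_le_of_two_mul_lt_dist hp hβ1 hest hz)

end PlugIn

/-- **Approximate maximum-likelihood plug-in estimation.** Let `Z` be a finite set, `P` a
collection of probability mass functions on `Z`, `f` a property, and `0 < β ≤ 1`. If some
estimator `fhat` estimates `f` to accuracy `ε` with error probability `< δ` for every
`p ∈ P`, then the plug-in estimator based on a `β`-approximate maximum-likelihood
distribution `ptil z` (satisfying `β * q z ≤ ptil z z` for all `q ∈ P`) estimates `f` to
accuracy `2ε` with error probability at most `δ * |Z| / β`. -/
theorem approx_ml_plugin_estimation {Z : Type*} [Fintype Z]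
    (P : Set (Z → ℝ))
    (hP : ∀ p ∈ P, (∀ z, 0 ≤ p z) ∧ ∑ z, p z = 1)
    (f : (Z → ℝ) → ℝ) (ε δ β : ℝ) (hε : 0 < ε) (hδ : 0 < δ)
    (hβ0 : 0 < β) (hβ1 : β ≤ 1)
    (fhat : Z → ℝ)
    (hest : ∀ p ∈ P, ∑ z ∈ Finset.univ.filter (fun z => ε < |f p - fhat z|), p z < δ)
    (ptil : Z → (Z → ℝ))
    (hptil_mem : ∀ z, ptil z ∈ P)
    (hptil_max : ∀ z, ∀ q ∈ P, β * q z ≤ ptil z z) :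
    ∀ p ∈ P,
      ∑ z ∈ Finset.univ.filter (fun z => 2 * ε < |f p - f (ptil z)|), p z
        ≤ δ * Fintype.card Z / β :=
  fun p hp => approx_ml_plugin_estimation_general (p := ((↑) : P → Z → ℝ)) (f := fun q => f q)
    (ml := fun z => ⟨ptil z, hptil_mem z⟩) (fun q => (hP q q.2).1) hβ0 hβ1
    (fun q => (hest q q.2).le) (fun z q => hptil_max z q q.2) ⟨p, hp⟩
end

section
/- Let X be a countable alphabet, P a collection of probability mass functions on X, f : P → ℝ, n ≥ 1 a natural number, 0 < α < 1/2, c > 0, ε > 0, and 0 < β ≤ 1. Suppose f̂ : X^n → ℝ is a profile-based estimator (f̂(x^n) depends only on the profile φ(x^n)) such that (i) for every p ∈ P, |E_{X^n iid p}[f̂(X^n)] − f(p)| ≤ ε, and (ii) changing any single coordinate of the input changes f̂ by at most c·n^α/n. For each profile φ ∈ Φ^n let p̃_φ ∈ P satisfy p̃_φ(φ) ≥ β·q(φ) for all q ∈ P (a β-approximate profile maximum likelihood distribution). If 2ε²·n^{1−2α}/c² ≥ 6√n + log 2 and β ≥ exp(−√n), then for every p ∈ P, the probability under X^n iid from p that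 |f(p) − f(p̃_{φ(X^n)})| > 4ε is at most exp(−√n). -/
open scoped Classical

/-- The profile of a sequence `x : Fin n → X`: the multiset of multiplicities of the
symbols appearing in the sequence. -/
noncomputable def profile {X : Type*} [DecidableEq X] {n : ℕ} (x : Fin n → X) :
    Multiset ℕ :=
  (Finset.univ.image x).val.map fun a => (Finset.univ.filter fun i => x i = a).card

/-- The probability of the sequence `x` under i.i.d. sampling from `p`. -/
noncomputable def seqProb {X : Type*} {n : ℕ} (p : X → ℝ) (x : Fin n → X) : ℝ :=
  ∏ i, p (x i)

/-- The probability under i.i.d. sampling from `p` that `n` samples form a sequence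
with profile `φ`. -/
noncomputable def profProb {X : Type*} [DecidableEq X] [Countable X] (n : ℕ)
    (p : X → ℝ) (φ : Multiset ℕ) : ℝ :=
  ∑' x : Fin n → X, if profile x = φ then seqProb p x else 0

/-!
By McDiarmid's inequality and the bias bound, under every `q ∈ P` the event that `fhat` misses
`f q` by more than `2ε` has probability at most `δ = 2 exp(-2ε² n^{1-2α} / c²)`. Since `fhat` is
constant on the sequences with a given profile, a profile whose probability under `q` exceeds `δ`
has an estimate within `2ε` of `f q`. If a profile `φ` has probability more than `δ / β` under `p`,
then it has probability more than `δ` under both `p` and its approximate maximum likelihood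
distribution, so both values of `f` are within `2ε` of the common estimate. Hence an error above
`4ε` only occurs on profiles of probability at most `δ / β`. Profiles of sequences of length `n` are
partitions of `n`, and there are at most `exp(π √(2n/3)) ≤ exp(4√n)` of those.

McDiarmid's inequality comes from integrating out one coordinate at a time, each contributing
`(c i / 2)²` to the sub-Gaussian parameter. The count of partitions comes from evaluating
`card n.Partition * x ^ n ≤ ∏ i ∈ Icc 1 n, (1 - x ^ i)⁻¹` at `x = exp(-s)`: expanding the logarithms
bounds the product by `exp(ζ(2) / s)`, and it remains to optimise `s`.
-/

open MeasureTheory ProbabilityTheory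
open scoped NNReal

section SubGaussian

variable {Ω Ω' : Type*} {mΩ : MeasurableSpace Ω} {mΩ' : MeasurableSpace Ω'}
  {μ : Measure Ω} {ν : Measure Ω'}

theorem hasSubgaussianMGF_sub_integral_of_abs_sub_le [IsProbabilityMeasure μ] {g : Ω → ℝ}
    {c : ℝ≥0} (hgm : AEMeasurable g μ) (hg : ∀ x y, |g x - g y| ≤ c) :
    HasSubgaussianMGF (fun x ↦ g x - ∫ y, g y ∂μ) ((c / 2) ^ 2) μ := by
  have : Nonempty Ω := nonempty_of_isProbabilityMeasure μ
  let x₀ := Classical.arbitrary Ω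
  have hbdd : BddBelow (Set.range g) :=
    ⟨g x₀ - c, Set.forall_mem_range.2 fun y ↦ by linarith [(abs_le.1 (hg x₀ y)).2]⟩
  have hmem (x : Ω) : g x ∈ Set.Icc (⨅ y, g y) ((⨅ y, g y) + c) := by
    have : g x - c ≤ ⨅ y, g y := le_ciInf fun y ↦ by linarith [(abs_le.1 (hg x y)).2]
    exact ⟨ciInf_le hbdd x, by linarith⟩
  simpa using hasSubgaussianMGF_of_mem_Icc hgm (ae_of_all μ hmem)

theorem integrable_of_abs_sub_le [IsProbabilityMeasure μ] {g : Ω → ℝ} {c : ℝ≥0}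
    (hgm : AEMeasurable g μ) (hg : ∀ x y, |g x - g y| ≤ c) : Integrable g μ := by
  simpa only [Pi.add_def, sub_add_cancel] using
    (hasSubgaussianMGF_sub_integral_of_abs_sub_le hgm hg).integrable.add
      (integrable_const (∫ y, g y ∂μ))

theorem hasSubgaussianMGF_prod_add {U : Ω → ℝ} {V : Ω × Ω' → ℝ} {c d : ℝ≥0}
    [SFinite μ] [SFinite ν]
    (hU : HasSubgaussianMGF U c μ) (hVm : AEStronglyMeasurable V (μ.prod ν))
    (hV : ∀ x, HasSubgaussianMGF (fun y ↦ V (x, y)) d ν) :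
    HasSubgaussianMGF (fun z ↦ U z.1 + V z) (c + d) (μ.prod ν) := by
  have hexp (t : ℝ) (x : Ω) (y : Ω') :
      Real.exp (t * (U x + V (x, y))) = Real.exp (t * U x) * Real.exp (t * V (x, y)) := by
    rw [mul_add, Real.exp_add]
  have hinner (t : ℝ) (x : Ω) :
      ∫ y, Real.exp (t * (U x + V (x, y))) ∂ν ≤ Real.exp (t * U x) * Real.exp (d * t ^ 2 / 2) := by
    simp only [hexp, integral_const_mul]
    gcongr
    exact (hV x).mgf_le t
  have hbound (t : ℝ) : Integrable (fun x ↦ Real.exp (t * U x) * Real.exp (d * t ^ 2 / 2)) μ :=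
    (hU.integrable_exp_mul t).mul_const _
  have hmeas (t : ℝ) :
      AEStronglyMeasurable (fun z : Ω × Ω' ↦ Real.exp (t * (U z.1 + V z))) (μ.prod ν) :=
    Real.continuous_exp.comp_aestronglyMeasurable
      ((hU.aestronglyMeasurable.comp_fst.add hVm).const_mul t)
  have hint (t : ℝ) : Integrable (fun z : Ω × Ω' ↦ Real.exp (t * (U z.1 + V z))) (μ.prod ν) := by
    rw [integrable_prod_iff (hmeas t)]
    refine ⟨ae_of_all μ fun x ↦ ?_, (hbound t).mono' (hmeas t).norm.integral_prod_right'
      (ae_of_all μ fun x ↦ ?_)⟩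
    · simpa only [hexp] using ((hV x).integrable_exp_mul t).const_mul (Real.exp (t * U x))
    · simp only [Real.norm_eq_abs, Real.abs_exp]
      rw [abs_of_nonneg (integral_nonneg fun _ ↦ (Real.exp_pos _).le)]
      exact hinner t x
  refine ⟨hint, fun t ↦ ?_⟩
  calc mgf (fun z : Ω × Ω' ↦ U z.1 + V z) (μ.prod ν) t
      = ∫ x, ∫ y, Real.exp (t * (U x + V (x, y))) ∂ν ∂μ := integral_prod _ (hint t)
    _ ≤ ∫ x, Real.exp (t * U x) * Real.exp (d * t ^ 2 / 2) ∂μ :=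
        integral_mono_of_nonneg
          (ae_of_all μ fun _ ↦ integral_nonneg fun _ ↦ (Real.exp_pos _).le) (hbound t)
          (ae_of_all μ (hinner t))
    _ = mgf U μ t * Real.exp (d * t ^ 2 / 2) := integral_mul_const _ _
    _ ≤ Real.exp (c * t ^ 2 / 2) * Real.exp (d * t ^ 2 / 2) := by gcongr; exact hU.mgf_le t
    _ = Real.exp ((c + d : ℝ≥0) * t ^ 2 / 2) := by
        rw [← Real.exp_add, NNReal.coe_add, add_mul, add_div]

theorem measureReal_abs_ge_le_of_hasSubgaussianMGF {U : Ω → ℝ} {c : ℝ≥0} {ε : ℝ}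
    (hU : HasSubgaussianMGF U c μ) (hε : 0 ≤ ε) :
    μ.real {x | ε ≤ |U x|} ≤ 2 * Real.exp (-ε ^ 2 / (2 * c)) := by
  have hunion : {x | ε ≤ |U x|} = {x | ε ≤ U x} ∪ {x | ε ≤ (-U) x} := by
    ext x
    exact le_abs (a := ε) (b := U x)
  calc μ.real {x | ε ≤ |U x|} ≤ μ.real {x | ε ≤ U x} + μ.real {x | ε ≤ (-U) x} := by
        rw [hunion]; exact measureReal_union_le _ _
    _ ≤ 2 * Real.exp (-ε ^ 2 / (2 * c)) := by
        linarith [hU.measure_ge_le hε, hU.neg.measure_ge_le hε]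

theorem hasSubgaussianMGF_sub_integral_of_measurePreserving {e : Ω ≃ᵐ Ω'}
    (he : MeasurePreserving e μ ν) {g : Ω' → ℝ} {c : ℝ≥0}
    (hg : HasSubgaussianMGF (fun x ↦ g (e x) - ∫ y, g (e y) ∂μ) c μ) :
    HasSubgaussianMGF (fun x ↦ g x - ∫ y, g y ∂ν) c ν := by
  rw [he.integral_comp', ← he.symm.map_eq] at hg
  simpa [Function.comp_def] using hg.of_map e.symm.measurable.aemeasurable

end SubGaussian

/-- The bounded differences property: `g` changes by at most `c i` when only the `i`-th coordinate
of its argument changes. It is phrased with pairs of points that agree off `i`, so that no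
decidable equality on the index type is needed. -/
def HasBoundedDifferences {ι : Type*} {X : ι → Type*} (g : (∀ i, X i) → ℝ) (c : ι → ℝ≥0) : Prop :=
  ∀ i x y, (∀ j ≠ i, x j = y j) → |g x - g y| ≤ c i

namespace HasBoundedDifferences

variable {ι : Type*} {X : ι → Type*} {g : (∀ i, X i) → ℝ} {c : ι → ℝ≥0}

theorem of_ne (h : ∀ i x y, x i ≠ y i → (∀ j ≠ i, x j = y j) → |g x - g y| ≤ c i) :
    HasBoundedDifferences g c := by
  intro i x y hxy
  by_cases hi : x i = y i
  · have : x = y := funext fun j ↦ if hj : j = i then hj ▸ hi else hxy j hj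
    simp [this]
  · exact h i x y hi hxy

theorem abs_sub_le_sum_of_eqOn_compl (hg : HasBoundedDifferences g c) (s : Finset ι) :
    ∀ x y : ∀ i, X i, (∀ i ∉ s, x i = y i) → |g x - g y| ≤ ∑ i ∈ s, (c i : ℝ) := by
  induction s using Finset.induction_on with
  | empty => intro x y hxy; simp [funext fun i ↦ hxy i (Finset.notMem_empty i)]
  | insert i s hi ih =>
    intro x y hxy
    have hfirst : |g x - g (Function.update x i (y i))| ≤ c i :=
      hg i _ _ fun j hj ↦ by simp [hj]
    have hrest : |g (Function.update x i (y i)) - g y| ≤ ∑ j ∈ s, (c j : ℝ) := by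
      refine ih _ _ fun j hj ↦ ?_
      by_cases hji : j = i
      · subst hji; simp
      · simpa [hji] using hxy j (by simp [hji, hj])
    rw [Finset.sum_insert hi]
    exact (abs_sub_le _ _ _).trans (add_le_add hfirst hrest)

theorem comp_piCongrLeft {ι' : Type*} (e : ι' ≃ ι) (hg : HasBoundedDifferences g c) :
    HasBoundedDifferences (fun x ↦ g (Equiv.piCongrLeft X e x)) (c ∘ e) := by
  intro i x y hxy
  refine hg (e i) _ _ fun j hj ↦ ?_
  obtain ⟨j, rfl⟩ := e.surjective j
  simpa using hxy j fun h ↦ hj (h ▸ rfl)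

protected theorem integral {Y : Type*} [MeasurableSpace Y] {ν : Measure Y} [IsProbabilityMeasure ν]
    {G : (∀ i, X i) → Y → ℝ} (hint : ∀ x, Integrable (G x) ν)
    (hG : ∀ a, HasBoundedDifferences (fun x ↦ G x a) c) :
    HasBoundedDifferences (fun x ↦ ∫ a, G x a ∂ν) c := by
  intro i x y hxy
  have hbound (a : Y) : ‖G x a - G y a‖ ≤ c i := hG a i x y hxy
  simpa [integral_sub (hint x) (hint y)] using
    norm_integral_le_of_norm_le_const (ae_of_all ν hbound)

theorem abs_sub_le_sum [Fintype ι] (hg : HasBoundedDifferences g c) (x y : ∀ i, X i) :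
    |g x - g y| ≤ (∑ i, c i : ℝ≥0) := by
  simpa using hg.abs_sub_le_sum_of_eqOn_compl Finset.univ x y (by simp)

theorem hasSubgaussianMGF_option [Fintype ι] {Y : Option ι → Type*}
    [∀ i, MeasurableSpace (Y i)] {g : (∀ i, Y i) → ℝ} {c : Option ι → ℝ≥0}
    (μ : ∀ i, Measure (Y i)) [∀ i, IsProbabilityMeasure (μ i)]
    (hg : HasBoundedDifferences g c) (hgm : Measurable g)
    (ih : ∀ h : (∀ i, Y (some i)) → ℝ, HasBoundedDifferences h (fun i ↦ c (some i)) →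
      Measurable h → HasSubgaussianMGF (fun x ↦ h x - ∫ y, h y ∂Measure.pi fun i ↦ μ (some i))
        (∑ i, (c (some i) / 2) ^ 2) (Measure.pi fun i ↦ μ (some i))) :
    HasSubgaussianMGF (fun x ↦ g x - ∫ y, g y ∂Measure.pi μ) (∑ i, (c i / 2) ^ 2)
      (Measure.pi μ) := by
  let e := (MeasurableEquiv.piOptionEquivProd Y).symm
  have he : MeasurePreserving e ((Measure.pi fun i ↦ μ (some i)).prod (μ none)) (Measure.pi μ) :=
    ⟨e.measurable, Measure.pi_map_piOptionEquivProd μ⟩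
  have hsome (x a i) : e (x, a) (some i) = x i := rfl
  have hnone (x a) : e (x, a) none = a := rfl
  have hgem : Measurable fun z ↦ g (e z) := hgm.comp e.measurable
  have hgexm (x) : Measurable fun a ↦ g (e (x, a)) := hgem.comp measurable_prodMk_left
  have hlast (x a b) : |g (e (x, a)) - g (e (x, b))| ≤ c none :=
    hg none _ _ fun j hj ↦ by cases j <;> simp_all only [ne_eq, not_true_eq_false]
  have hint (x) : Integrable (fun a ↦ g (e (x, a))) (μ none) :=
    integrable_of_abs_sub_le (hgexm x).aemeasurable (hlast x)
  let h (x : ∀ i, Y (some i)) : ℝ := ∫ a, g (e (x, a)) ∂μ none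
  have hhm : Measurable h := hgem.stronglyMeasurable.integral_prod_right.measurable
  have hh : HasBoundedDifferences h fun i ↦ c (some i) := .integral hint fun a i x y hxy ↦ by
    refine hg (some i) _ _ fun j hj ↦ ?_
    cases j with
    | none => simp only [hnone]
    | some j => simpa only [hsome] using hxy j fun hji ↦ hj (hji ▸ rfl)
  have hmean : ∫ z, g (e z) ∂(Measure.pi fun i ↦ μ (some i)).prod (μ none) =
      ∫ x, h x ∂Measure.pi fun i ↦ μ (some i) :=
    integral_prod _ <| integrable_of_abs_sub_le hgem.aemeasurable fun z w ↦
      hg.abs_sub_le_sum (e z) (e w)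
  refine hasSubgaussianMGF_sub_integral_of_measurePreserving he ?_
  simpa [hmean, Fintype.sum_option, add_comm] using
    hasSubgaussianMGF_prod_add (V := fun z ↦ g (e z) - h z.1) (ih h hh hhm)
      (hgem.sub (hhm.comp measurable_fst)).aestronglyMeasurable
      fun x ↦ hasSubgaussianMGF_sub_integral_of_abs_sub_le (hgexm x).aemeasurable (hlast x)

variable [hι : Fintype ι] [∀ i, MeasurableSpace (X i)]

theorem hasSubgaussianMGF (μ : ∀ i, Measure (X i)) [∀ i, IsProbabilityMeasure (μ i)]
    (hg : HasBoundedDifferences g c) (hgm : Measurable g) :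
    HasSubgaussianMGF (fun x ↦ g x - ∫ y, g y ∂Measure.pi μ) (∑ i, (c i / 2) ^ 2)
      (Measure.pi μ) := by
  revert X c
  refine @(Fintype.induction_empty_option ?_ ?_ ?_ ι (h_fintype := hι))
  · intro ι ι' _ e ih X g c _ μ _ hg hgm
    let _ := Fintype.ofEquiv ι' e.symm
    let E := MeasurableEquiv.piCongrLeft X e
    refine hasSubgaussianMGF_sub_integral_of_measurePreserving (e := E)
      (measurePreserving_piCongrLeft μ e) ?_
    rw [← e.sum_comp]
    exact ih (fun i ↦ μ (e i)) (hg.comp_piCongrLeft e) (hgm.comp E.measurable)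
  · intro X g c _ μ _ _ hgm
    simpa using hasSubgaussianMGF_sub_integral_of_abs_sub_le (μ := Measure.pi μ) (c := 0)
      hgm.aemeasurable fun x y ↦ by simp [Subsingleton.elim x y]
  · intro ι _ ih X g c _ μ _ hg hgm
    exact hasSubgaussianMGF_option μ hg hgm fun h hh hhm ↦ ih _ hh hhm

theorem measureReal_abs_sub_integral_ge_le
    (μ : ∀ i, Measure (X i)) [∀ i, IsProbabilityMeasure (μ i)]
    (hg : HasBoundedDifferences g c) (hgm : Measurable g) {ε : ℝ} (hε : 0 ≤ ε) :
    (Measure.pi μ).real {x | ε ≤ |g x - ∫ y, g y ∂Measure.pi μ|} ≤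
      2 * Real.exp (-(2 * ε ^ 2 / ∑ i, (c i : ℝ) ^ 2)) := by
  convert measureReal_abs_ge_le_of_hasSubgaussianMGF (hg.hasSubgaussianMGF μ hgm) hε using 3
  simp only [NNReal.coe_sum, NNReal.coe_pow, NNReal.coe_div, NNReal.coe_ofNat, div_pow,
    ← Finset.sum_div]
  rw [neg_div, neg_inj]
  generalize ∑ i, (c i : ℝ) ^ 2 = S
  rw [show 2 * (S / 2 ^ 2) = S / 2 by ring, div_div_eq_mul_div, mul_comm]

theorem measureReal_lt_abs_sub_le (μ : ∀ i, Measure (X i)) [∀ i, IsProbabilityMeasure (μ i)]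
    (hg : HasBoundedDifferences g c) (hgm : Measurable g) {a b ε : ℝ} (hε : 0 ≤ ε)
    (hbias : |∫ y, g y ∂Measure.pi μ - a| ≤ b) :
    (Measure.pi μ).real {x | b + ε < |g x - a|} ≤
      2 * Real.exp (-(2 * ε ^ 2 / ∑ i, (c i : ℝ) ^ 2)) := by
  refine (measureReal_mono fun x (hx : b + ε < |g x - a|) ↦ ?_).trans
    (hg.measureReal_abs_sub_integral_ge_le μ hgm hε)
  have htri := abs_sub_le (g x) (∫ y, g y ∂Measure.pi μ) a
  change ε ≤ |g x - ∫ y, g y ∂Measure.pi μ|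
  linarith

end HasBoundedDifferences

section PartitionBound

theorem toFinset_parts_subset_Icc {n : ℕ} (P : n.Partition) : P.parts.toFinset ⊆ Finset.Icc 1 n :=
  fun _ hi ↦ Finset.mem_Icc.2
    ⟨P.parts_pos (Multiset.mem_toFinset.1 hi), P.le_of_mem_parts (Multiset.mem_toFinset.1 hi)⟩

theorem sum_Icc_count_parts_mul {n : ℕ} (P : n.Partition) :
    ∑ i ∈ Finset.Icc 1 n, P.parts.count i * i = n := by
  simpa only [P.parts_sum, smul_eq_mul] using
    (Finset.sum_multiset_count_of_subset P.parts _ (toFinset_parts_subset_Icc P)).symm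

theorem injective_restrict_count_parts (n : ℕ) : Function.Injective
    fun (P : n.Partition) (i : Finset.Icc 1 n) ↦ P.parts.count (i : ℕ) := by
  intro P Q hPQ
  have hzero (R : n.Partition) {i : ℕ} (hi : i ∉ Finset.Icc 1 n) : R.parts.count i = 0 :=
    Multiset.count_eq_zero.2 fun h ↦ hi (toFinset_parts_subset_Icc R (Multiset.mem_toFinset.2 h))
  ext i
  by_cases hi : i ∈ Finset.Icc 1 n
  · exact congrFun hPQ ⟨i, hi⟩
  · rw [hzero P hi, hzero Q hi]

theorem sum_range_pow_le_inv_one_sub {x : ℝ} (hx₀ : 0 ≤ x) (hx₁ : x < 1) (n : ℕ) :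
    ∑ k ∈ Finset.range n, x ^ k ≤ (1 - x)⁻¹ :=
  (tsum_geometric_of_lt_one hx₀ hx₁) ▸
    (summable_geometric_of_lt_one hx₀ hx₁).sum_le_tsum _ fun _ _ ↦ pow_nonneg hx₀ _

theorem card_partition_mul_pow_le_prod (n : ℕ) {x : ℝ} (hx₀ : 0 ≤ x) (hx₁ : x < 1) :
    Fintype.card n.Partition * x ^ n ≤ ∏ i ∈ Finset.Icc 1 n, (1 - x ^ i)⁻¹ := by
  let count (P : n.Partition) (i : Finset.Icc 1 n) : ℕ := P.parts.count (i : ℕ)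
  have hpow (P : n.Partition) : x ^ n = ∏ i : Finset.Icc 1 n, (x ^ (i : ℕ)) ^ count P i := by
    rw [Finset.prod_coe_sort (Finset.Icc 1 n) fun i ↦ (x ^ i) ^ P.parts.count i]
    simp_rw [← pow_mul', Finset.prod_pow_eq_pow_sum, sum_Icc_count_parts_mul]
  have hmem (P : n.Partition) :
      count P ∈ Fintype.piFinset fun _ : Finset.Icc 1 n ↦ Finset.range (n + 1) := by
    refine Fintype.mem_piFinset.2 fun i ↦ Finset.mem_range_succ_iff.2 ?_
    calc count P i ≤ count P i * i := Nat.le_mul_of_pos_right _ (Finset.mem_Icc.1 i.2).1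
      _ ≤ ∑ i ∈ Finset.Icc 1 n, P.parts.count i * i :=
        Finset.single_le_sum_of_canonicallyOrdered (f := fun i ↦ P.parts.count i * i) i.2
      _ = n := sum_Icc_count_parts_mul P
  calc Fintype.card n.Partition * x ^ n
      = ∑ P : n.Partition, ∏ i : Finset.Icc 1 n, (x ^ (i : ℕ)) ^ count P i := by
        simp_rw [← hpow, Finset.sum_const, Finset.card_univ, nsmul_eq_mul]
    _ = ∑ m ∈ Finset.univ.image count, ∏ i : Finset.Icc 1 n, (x ^ (i : ℕ)) ^ m i := by
        rw [Finset.sum_image (injective_restrict_count_parts n).injOn]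
    _ ≤ ∑ m ∈ Fintype.piFinset fun _ : Finset.Icc 1 n ↦ Finset.range (n + 1),
          ∏ i : Finset.Icc 1 n, (x ^ (i : ℕ)) ^ m i :=
        Finset.sum_le_sum_of_subset_of_nonneg
          (Finset.image_subset_iff.2 fun P _ ↦ hmem P) fun _ _ _ ↦ by positivity
    _ = ∏ i : Finset.Icc 1 n, ∑ k ∈ Finset.range (n + 1), (x ^ (i : ℕ)) ^ k :=
        (Finset.prod_univ_sum _ _).symm
    _ ≤ ∏ i : Finset.Icc 1 n, (1 - x ^ (i : ℕ))⁻¹ :=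
        Finset.prod_le_prod (fun _ _ ↦ by positivity) fun i _ ↦
          sum_range_pow_le_inv_one_sub (by positivity)
            (pow_lt_one₀ hx₀ hx₁ (Nat.one_le_iff_ne_zero.1 (Finset.mem_Icc.1 i.2).1)) _
    _ = ∏ i ∈ Finset.Icc 1 n, (1 - x ^ i)⁻¹ := Finset.prod_coe_sort _ fun i ↦ (1 - x ^ i)⁻¹

theorem sum_Icc_exp_neg_mul_le (n : ℕ) {u : ℝ} (hu : 0 < u) :
    ∑ i ∈ Finset.Icc 1 n, Real.exp (-(u * i)) ≤ 1 / u := by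
  have hlt : Real.exp (-u) < 1 := Real.exp_lt_one_iff.2 (neg_lt_zero.2 hu)
  have hterm (k : ℕ) : Real.exp (-(u * (k + 1 : ℕ))) = Real.exp (-u) * Real.exp (-u) ^ k := by
    rw [← pow_succ', ← Real.exp_nat_mul]
    congr 1
    ring
  calc ∑ i ∈ Finset.Icc 1 n, Real.exp (-(u * i))
      = Real.exp (-u) * ∑ k ∈ Finset.range n, Real.exp (-u) ^ k := by
        rw [Finset.range_eq_Ico, Finset.mul_sum, ← Finset.Ico_add_one_right_eq_Icc,
          ← Finset.sum_Ico_add' (fun i : ℕ ↦ Real.exp (-(u * i))) 0 n 1]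
        exact Finset.sum_congr rfl fun k _ ↦ hterm k
    _ ≤ Real.exp (-u) * (1 - Real.exp (-u))⁻¹ := by
        gcongr
        exact sum_range_pow_le_inv_one_sub (Real.exp_pos _).le hlt n
    _ ≤ 1 / u := by
        rw [← div_eq_mul_inv, div_le_div_iff₀ (sub_pos.2 hlt) hu]
        have := mul_le_mul_of_nonneg_left (Real.add_one_le_exp u) (Real.exp_pos (-u)).le
        rw [← Real.exp_add, neg_add_cancel, Real.exp_zero] at this
        linarith

theorem sum_Icc_neg_log_one_sub_exp_le (n : ℕ) {s : ℝ} (hs : 0 < s) :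
    ∑ i ∈ Finset.Icc 1 n, -Real.log (1 - Real.exp (-(s * i))) ≤ Real.pi ^ 2 / 6 / s := by
  have hlog : HasSum (fun m : ℕ ↦ ∑ i ∈ Finset.Icc 1 n, Real.exp (-(s * i)) ^ (m + 1) / (m + 1 : ℝ))
      (∑ i ∈ Finset.Icc 1 n, -Real.log (1 - Real.exp (-(s * i)))) := by
    refine hasSum_sum fun i hi ↦ Real.hasSum_pow_div_log_of_abs_lt_one ?_
    have hi' : (0 : ℝ) < i := Nat.cast_pos.2 (Finset.mem_Icc.1 hi).1
    rw [Real.abs_exp, Real.exp_lt_one_iff]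
    exact neg_lt_zero.2 (mul_pos hs hi')
  have hzeta : HasSum (fun m : ℕ ↦ 1 / (m + 1 : ℝ) ^ 2 / s) (Real.pi ^ 2 / 6 / s) := by
    simpa using ((hasSum_nat_add_iff' 1).2 hasSum_zeta_two).div_const s
  refine hasSum_le (fun m ↦ ?_) hlog hzeta
  have hpow (i : ℕ) : Real.exp (-(s * i)) ^ (m + 1) = Real.exp (-(s * (m + 1) * i)) := by
    rw [← Real.exp_nat_mul]
    congr 1
    push_cast
    ring
  simp_rw [hpow, ← Finset.sum_div]
  calc (∑ i ∈ Finset.Icc 1 n, Real.exp (-(s * (m + 1) * i))) / (m + 1 : ℝ)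
      ≤ 1 / (s * (m + 1)) / (m + 1 : ℝ) := by
        gcongr
        exact sum_Icc_exp_neg_mul_le n (by positivity)
    _ = 1 / (m + 1 : ℝ) ^ 2 / s := by field_simp

theorem card_partition_le_exp_add (n : ℕ) {s : ℝ} (hs : 0 < s) :
    (Fintype.card n.Partition : ℝ) ≤ Real.exp (s * n + Real.pi ^ 2 / 6 / s) := by
  have hlt : Real.exp (-s) < 1 := Real.exp_lt_one_iff.2 (neg_lt_zero.2 hs)
  have hprod : ∏ i ∈ Finset.Icc 1 n, (1 - Real.exp (-s) ^ i)⁻¹ ≤ Real.exp (Real.pi ^ 2 / 6 / s) :=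
    calc ∏ i ∈ Finset.Icc 1 n, (1 - Real.exp (-s) ^ i)⁻¹
        = Real.exp (∑ i ∈ Finset.Icc 1 n, -Real.log (1 - Real.exp (-(s * i)))) := by
          rw [Real.exp_sum]
          refine Finset.prod_congr rfl fun i hi ↦ ?_
          have hpow : Real.exp (-s) ^ i < 1 :=
            pow_lt_one₀ (Real.exp_pos _).le hlt (Nat.one_le_iff_ne_zero.1 (Finset.mem_Icc.1 hi).1)
          rw [show -(s * i) = i * -s by ring, Real.exp_nat_mul, Real.exp_neg (Real.log _),
            Real.exp_log (sub_pos.2 hpow)]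
      _ ≤ Real.exp (Real.pi ^ 2 / 6 / s) :=
          Real.exp_le_exp.2 (sum_Icc_neg_log_one_sub_exp_le n hs)
  have hcard := (card_partition_mul_pow_le_prod n (Real.exp_pos _).le hlt).trans hprod
  rwa [← Real.exp_nat_mul, mul_neg, Real.exp_neg, mul_comm (n : ℝ),
    ← div_eq_mul_inv, div_le_iff₀ (Real.exp_pos _), ← Real.exp_add, add_comm] at hcard

theorem card_partition_le_exp (n : ℕ) :
    (Fintype.card n.Partition : ℝ) ≤ Real.exp (Real.pi * √(2 * n / 3)) := by
  rcases n.eq_zero_or_pos with rfl | hn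
  · simp
  have : (0 : ℝ) < n := Nat.cast_pos.2 hn
  have hsq : √(6 * n) ^ 2 = 6 * n := Real.sq_sqrt (by positivity)
  have hsqrt : √(2 * n / 3) = √(6 * n) / 3 := by
    rw [show (2 * n / 3 : ℝ) = 6 * n / 3 ^ 2 by ring, Real.sqrt_div (by positivity),
      Real.sqrt_sq (by norm_num)]
  -- `s = π / √(6 n)` minimises the exponent `s n + π² / (6 s)`.
  refine (card_partition_le_exp_add n (s := Real.pi / √(6 * n)) (by positivity)).trans_eq ?_
  rw [hsqrt]
  congr 1
  field_simp
  rw [hsq]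
  ring

end PartitionBound

/-- The profile of a sequence of length `n`, as a partition of `n`. It lets the union bound over
profiles range over a finite type. -/
noncomputable def profilePartition {X : Type*} [DecidableEq X] {n : ℕ} (x : Fin n → X) :
    n.Partition where
  parts := profile x
  parts_pos {i} hi := by
    obtain ⟨a, ha, rfl⟩ := Multiset.mem_map.1 hi
    obtain ⟨j, -, hj⟩ := Finset.mem_image.1 (Finset.mem_def.2 ha)
    exact Finset.card_pos.2 ⟨j, by simpa using hj⟩
  parts_sum := by
    have hcard := Finset.card_eq_sum_card_image x Finset.univ
    rw [Finset.card_univ, Fintype.card_fin] at hcard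
    exact hcard.symm

theorem profilePartition_eq_iff {X : Type*} [DecidableEq X] {n : ℕ} {x y : Fin n → X} :
    profilePartition x = profilePartition y ↔ profile x = profile y :=
  Nat.Partition.ext_iff

section DiscreteMeasure

variable {X : Type*} [MeasurableSpace X]

/-- The measure on a discrete space with mass function `p` (negative masses are truncated to `0`).
It bridges the mass functions of the statement and Mathlib's product measures. -/
noncomputable def massMeasure (p : X → ℝ) : Measure X :=
  Measure.sum fun x ↦ ENNReal.ofReal (p x) • Measure.dirac x

theorem isProbabilityMeasure_massMeasure {p : X → ℝ} (hp : ∀ x, 0 ≤ p x)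
    (hp₁ : ∑' x, p x = 1) : IsProbabilityMeasure (massMeasure p) where
  measure_univ := by
    have hsum : Summable p := by
      by_contra h
      simp [tsum_eq_zero_of_not_summable h] at hp₁
    simp [massMeasure, ← ENNReal.ofReal_tsum_of_nonneg hp hsum, hp₁]

/-- The law of `n` i.i.d. samples from the mass function `p`. -/
noncomputable def iidMeasure (n : ℕ) (p : X → ℝ) : Measure (Fin n → X) :=
  Measure.pi fun _ ↦ massMeasure p

variable {n : ℕ} {p : X → ℝ}

instance [IsProbabilityMeasure (massMeasure p)] : IsProbabilityMeasure (iidMeasure n p) :=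
  inferInstanceAs (IsProbabilityMeasure (Measure.pi _))

variable [MeasurableSingletonClass X]

theorem massMeasure_singleton (p : X → ℝ) (x : X) :
    massMeasure p {x} = ENNReal.ofReal (p x) :=
  Measure.sum_smul_dirac_singleton

variable [IsProbabilityMeasure (massMeasure p)]

theorem iidMeasure_real_singleton (hp : ∀ x, 0 ≤ p x) (x : Fin n → X) :
    (iidMeasure n p).real {x} = seqProb p x := by
  simp [Measure.real, iidMeasure, seqProb, Measure.pi_singleton, massMeasure_singleton, hp,
    ENNReal.toReal_prod, ENNReal.toReal_ofReal]

variable [Countable X]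

theorem integral_iidMeasure (hp : ∀ x, 0 ≤ p x) {g : (Fin n → X) → ℝ}
    (hg : Integrable g (iidMeasure n p)) :
    ∫ x, g x ∂iidMeasure n p = ∑' x, seqProb p x * g x := by
  simp only [integral_countable hg, iidMeasure_real_singleton hp, smul_eq_mul]

theorem tsum_ite_seqProb (hp : ∀ x, 0 ≤ p x) (A : (Fin n → X) → Prop) [DecidablePred A] :
    ∑' x, (if A x then seqProb p x else 0) = (iidMeasure n p).real {x | A x} := by
  have hA : MeasurableSet {x | A x} := (Set.to_countable _).measurableSet
  have hint : Integrable ({x | A x}.indicator (1 : (Fin n → X) → ℝ)) (iidMeasure n p) :=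
    (integrable_const (1 : ℝ)).indicator hA
  rw [← integral_indicator_one hA, integral_iidMeasure hp hint]
  simp [Set.indicator_apply]

theorem profProb_profile [DecidableEq X] (hp : ∀ x, 0 ≤ p x) (x : Fin n → X) :
    profProb n p (profile x) =
      (iidMeasure n p).real (profilePartition ⁻¹' {profilePartition x}) := by
  simp only [profProb, tsum_ite_seqProb hp, ← profilePartition_eq_iff]
  rfl

theorem iidMeasure_real_lt_abs_sub_le (hp : ∀ x, 0 ≤ p x) {g : (Fin n → X) → ℝ} {c : ℝ≥0}
    (hg : HasBoundedDifferences g fun _ ↦ c) {a ε : ℝ}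
    (hbias : |∑' x, seqProb p x * g x - a| ≤ ε) :
    (iidMeasure n p).real {x | 2 * ε < |g x - a|} ≤
      2 * Real.exp (-(2 * ε ^ 2 / (n * c ^ 2))) := by
  have hgm : Measurable g := measurable_of_countable g
  have hint : Integrable g (iidMeasure n p) :=
    integrable_of_abs_sub_le hgm.aemeasurable hg.abs_sub_le_sum
  rw [← integral_iidMeasure hp hint] at hbias
  simpa [iidMeasure, two_mul ε] using
    hg.measureReal_lt_abs_sub_le (fun _ ↦ massMeasure p) hgm ((abs_nonneg _).trans hbias) hbias

end DiscreteMeasure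

section PlugIn

variable {Ω Θ S : Type*} [MeasurableSpace Ω] {μ : Θ → Measure Ω} {P : Set Θ}
  {T : Ω → S} {est : Ω → ℝ} {f : Θ → ℝ} {θhat : S → Θ} {r δ β : ℝ}

theorem abs_sub_le_of_lt_measureReal_fiber {μ : Measure Ω} [IsFiniteMeasure μ] {a : ℝ}
    (hest : est.FactorsThrough T) (hconc : μ.real {ω | r < |est ω - a|} ≤ δ) {ω : Ω}
    (hω : δ < μ.real (T ⁻¹' {T ω})) : |est ω - a| ≤ r := by
  by_contra! hbad
  have hsub : T ⁻¹' {T ω} ⊆ {ω | r < |est ω - a|} := fun ω' hω' ↦ by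
    change r < |est ω' - a|
    rwa [hest hω']
  exact hω.not_ge ((measureReal_mono hsub).trans hconc)

theorem measureReal_fiber_le_of_lt_abs_sub (hμ : ∀ θ ∈ P, IsFiniteMeasure (μ θ))
    (hest : est.FactorsThrough T)
    (hconc : ∀ θ ∈ P, (μ θ).real {ω | r < |est ω - f θ|} ≤ δ)
    (hβ₀ : 0 < β) (hβ₁ : β ≤ 1) (hmem : ∀ ω, θhat (T ω) ∈ P)
    (hmax : ∀ ω, ∀ θ ∈ P,
      β * (μ θ).real (T ⁻¹' {T ω}) ≤ (μ (θhat (T ω))).real (T ⁻¹' {T ω}))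
    {θ : Θ} (hθ : θ ∈ P) {ω : Ω} (hω : 2 * r < |f θ - f (θhat (T ω))|) :
    (μ θ).real (T ⁻¹' {T ω}) ≤ δ / β := by
  by_contra! hlarge
  have hlarge' : δ < β * (μ θ).real (T ⁻¹' {T ω}) := (div_lt_iff₀' hβ₀).1 hlarge
  have hclose : |est ω - f θ| ≤ r := by
    have := hμ θ hθ
    exact abs_sub_le_of_lt_measureReal_fiber hest (hconc θ hθ)
      (hlarge'.trans_le (mul_le_of_le_one_left measureReal_nonneg hβ₁))
  have hclose' : |est ω - f (θhat (T ω))| ≤ r := by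
    have := hμ _ (hmem ω)
    exact abs_sub_le_of_lt_measureReal_fiber hest (hconc _ (hmem ω))
      (hlarge'.trans_le (hmax ω θ hθ))
  have htri := abs_sub_le (f θ) (est ω) (f (θhat (T ω)))
  rw [abs_sub_comm (f θ) (est ω)] at htri
  linarith

theorem measureReal_le_card_mul_of_fiber_le [Fintype S] {μ : Measure Ω} [IsFiniteMeasure μ]
    {B : Set Ω} {η : ℝ} (hη : 0 ≤ η) (hB : ∀ ω ∈ B, μ.real (T ⁻¹' {T ω}) ≤ η) :
    μ.real B ≤ Fintype.card S * η := by
  let s : Finset S := {t | ∃ ω ∈ B, T ω = t}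
  have hcover : B ⊆ ⋃ t ∈ s, T ⁻¹' {t} := fun ω hω ↦ by simpa [s] using ⟨ω, hω, rfl⟩
  calc μ.real B ≤ μ.real (⋃ t ∈ s, T ⁻¹' {t}) := measureReal_mono hcover (measure_ne_top _ _)
    _ ≤ ∑ t ∈ s, μ.real (T ⁻¹' {t}) := measureReal_biUnion_finset_le _ _
    _ ≤ ∑ _t ∈ s, η := Finset.sum_le_sum fun t ht ↦ by
        obtain ⟨ω, hω, rfl⟩ : ∃ ω ∈ B, T ω = t := by simpa [s] using ht
        exact hB ω hω
    _ ≤ Fintype.card S * η := by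
        rw [Finset.sum_const, nsmul_eq_mul]
        gcongr
        exact s.card_le_univ

theorem measureReal_lt_abs_sub_plugin_le [Fintype S] (hμ : ∀ θ ∈ P, IsFiniteMeasure (μ θ))
    (hest : est.FactorsThrough T)
    (hconc : ∀ θ ∈ P, (μ θ).real {ω | r < |est ω - f θ|} ≤ δ)
    (hβ₀ : 0 < β) (hβ₁ : β ≤ 1) (hmem : ∀ ω, θhat (T ω) ∈ P)
    (hmax : ∀ ω, ∀ θ ∈ P,
      β * (μ θ).real (T ⁻¹' {T ω}) ≤ (μ (θhat (T ω))).real (T ⁻¹' {T ω}))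
    {θ : Θ} (hθ : θ ∈ P) :
    (μ θ).real {ω | 2 * r < |f θ - f (θhat (T ω))|} ≤ Fintype.card S * (δ / β) :=
  have := hμ θ hθ
  have hδ : 0 ≤ δ := measureReal_nonneg.trans (hconc θ hθ)
  measureReal_le_card_mul_of_fiber_le (div_nonneg hδ hβ₀.le) fun _ hω ↦
    measureReal_fiber_le_of_lt_abs_sub hμ hest hconc hβ₀ hβ₁ hmem hmax hθ hω

end PlugIn

theorem tsum_ite_lt_abs_sub_approxPML_le {X : Type*} [DecidableEq X] [Countable X]
    {P : Set (X → ℝ)} (hP : ∀ p ∈ P, (∀ x, 0 ≤ p x) ∧ ∑' x, p x = 1) {f : (X → ℝ) → ℝ}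
    {n : ℕ} {c : ℝ≥0} {ε β : ℝ} (hβ₀ : 0 < β) (hβ₁ : β ≤ 1) {fhat : (Fin n → X) → ℝ}
    (hfhat : fhat.FactorsThrough profile) (hbd : HasBoundedDifferences fhat fun _ ↦ c)
    (hbias : ∀ p ∈ P, |∑' x, seqProb p x * fhat x - f p| ≤ ε)
    {ptil : Multiset ℕ → X → ℝ} (hmem : ∀ x : Fin n → X, ptil (profile x) ∈ P)
    (hmax : ∀ x : Fin n → X, ∀ q ∈ P,
      β * profProb n q (profile x) ≤ profProb n (ptil (profile x)) (profile x))
    {p : X → ℝ} (hp : p ∈ P) :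
    ∑' x : Fin n → X, (if 4 * ε < |f p - f (ptil (profile x))| then seqProb p x else 0) ≤
      Real.exp (Real.pi * √(2 * n / 3)) * (2 * Real.exp (-(2 * ε ^ 2 / (n * c ^ 2))) / β) := by
  let _ : MeasurableSpace X := ⊤
  have hprob (q) (hq : q ∈ P) : IsProbabilityMeasure (massMeasure q) :=
    isProbabilityMeasure_massMeasure (hP q hq).1 (hP q hq).2
  have hconc (q) (hq : q ∈ P) : (iidMeasure n q).real {x | 2 * ε < |fhat x - f q|} ≤
      2 * Real.exp (-(2 * ε ^ 2 / (n * c ^ 2))) :=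
    have := hprob q hq
    iidMeasure_real_lt_abs_sub_le (hP q hq).1 hbd (hbias q hq)
  have hfiber (q) (hq : q ∈ P) (x : Fin n → X) : profProb n q (profile x) =
      (iidMeasure n q).real (profilePartition ⁻¹' {profilePartition x}) :=
    have := hprob q hq
    profProb_profile (hP q hq).1 x
  have hmax' (x : Fin n → X) (q) (hq : q ∈ P) :
      β * (iidMeasure n q).real (profilePartition ⁻¹' {profilePartition x}) ≤
        (iidMeasure n (ptil (profile x))).real (profilePartition ⁻¹' {profilePartition x}) := by
    simpa only [hfiber q hq, hfiber _ (hmem x)] using hmax x q hq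
  have hplugin := measureReal_lt_abs_sub_plugin_le (T := profilePartition) (est := fhat)
    (θhat := fun φ ↦ ptil φ.parts) (fun q hq ↦ have := hprob q hq; inferInstance)
    (fun x y hxy ↦ hfhat (profilePartition_eq_iff.1 hxy)) hconc hβ₀ hβ₁ hmem hmax' hp
  have := hprob p hp
  rw [tsum_ite_seqProb (hP p hp).1, show 4 * ε = 2 * (2 * ε) by ring]
  refine hplugin.trans ?_
  gcongr
  exact card_partition_le_exp n

theorem mul_sq_mul_rpow_div_self {x : ℝ} (hx : 0 < x) (c α : ℝ) :
    x * (c * x ^ α / x) ^ 2 = c ^ 2 / x ^ (1 - 2 * α) := by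
  rw [Real.rpow_sub hx, Real.rpow_one, two_mul, Real.rpow_add hx]
  field_simp

theorem exp_mul_two_mul_exp_neg_div_le {x a β : ℝ} (hx : 0 ≤ x) (ha : 6 * √x + Real.log 2 ≤ a)
    (hβ : Real.exp (-√x) ≤ β) :
    Real.exp (Real.pi * √(2 * x / 3)) * (2 * Real.exp (-a) / β) ≤ Real.exp (-√x) := by
  have hpi : Real.pi * √(2 * x / 3) ≤ 4 * √x := by
    gcongr
    · exact Real.pi_le_four
    · linarith
  have htwo : 2 * Real.exp (-a) ≤ Real.exp (-(6 * √x)) :=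
    calc 2 * Real.exp (-a) = Real.exp (Real.log 2 + -a) := by
          rw [Real.exp_add, Real.exp_log two_pos]
      _ ≤ Real.exp (-(6 * √x)) := Real.exp_le_exp.2 (by linarith)
  have hβ₀ : 0 < β := (Real.exp_pos _).trans_le hβ
  calc Real.exp (Real.pi * √(2 * x / 3)) * (2 * Real.exp (-a) / β)
      ≤ Real.exp (4 * √x) * (Real.exp (-(6 * √x)) / Real.exp (-√x)) := by gcongr
    _ = Real.exp (-√x) := by
        rw [← Real.exp_sub, ← Real.exp_add]
        ring_nf

theorem approx_pml_plugin_sharp_general {X : Type*} [DecidableEq X] [Countable X]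
    (P : Set (X → ℝ)) (hP : ∀ p ∈ P, (∀ x, 0 ≤ p x) ∧ ∑' x, p x = 1)
    (f : (X → ℝ) → ℝ)
    (n : ℕ) (hn : 1 ≤ n) (α c ε β : ℝ)
    (hc : 0 < c) (hβ1 : β ≤ 1)
    (fhat : (Fin n → X) → ℝ)
    (hprofileBased : ∀ x y : Fin n → X, profile x = profile y → fhat x = fhat y)
    (hbias : ∀ p ∈ P, |(∑' x : Fin n → X, seqProb p x * fhat x) - f p| ≤ ε)
    (hbd : ∀ (x y : Fin n → X) (j : Fin n), x j ≠ y j → (∀ i, i ≠ j → x i = y i) →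
      |fhat x - fhat y| ≤ c * (n : ℝ) ^ α / n)
    (ptil : Multiset ℕ → (X → ℝ))
    (hptil_mem : ∀ x : Fin n → X, ptil (profile x) ∈ P)
    (hptil_max : ∀ x : Fin n → X, ∀ q ∈ P,
      β * profProb n q (profile x) ≤ profProb n (ptil (profile x)) (profile x))
    (hcond : 6 * Real.sqrt n + Real.log 2 ≤ 2 * ε ^ 2 * (n : ℝ) ^ (1 - 2 * α) / c ^ 2)
    (hβ : Real.exp (-Real.sqrt n) ≤ β) :
    ∀ p ∈ P,
      (∑' x : Fin n → X,
          if 4 * ε < |f p - f (ptil (profile x))| then seqProb p x else 0)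
        ≤ Real.exp (-Real.sqrt n) := by
  intro p hp
  have hn' : (0 : ℝ) < n := Nat.cast_pos.2 hn
  let C : ℝ≥0 := ⟨c * (n : ℝ) ^ α / n, by positivity⟩
  have hC : (n : ℝ) * C ^ 2 = c ^ 2 / (n : ℝ) ^ (1 - 2 * α) := mul_sq_mul_rpow_div_self hn' c α
  have hbd' : HasBoundedDifferences fhat fun _ ↦ C :=
    .of_ne fun j x y hne heq ↦ hbd x y j hne heq
  have hbound := tsum_ite_lt_abs_sub_approxPML_le hP ((Real.exp_pos _).trans_le hβ) hβ1
    hprofileBased hbd' hbias hptil_mem hptil_max hp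
  rw [hC, div_div_eq_mul_div] at hbound
  exact hbound.trans (exp_mul_two_mul_exp_neg_div_le hn'.le hcond hβ)

/-- **Sample-optimality of approximate PML plug-in estimation.** If a profile-based
estimator `fhat` on `n` samples has bias at most `ε` on every `p ∈ P` and bounded
differences `c * n^α / n`, and if `2ε²·n^{1-2α}/c² ≥ 6√n + log 2` and
`β ≥ exp(-√n)`, then the plug-in estimator using any `β`-approximate profile maximum
likelihood distribution estimates `f p` to accuracy `4ε` with error probability at most
`exp(-√n)`. -/
theorem approx_pml_plugin_sharp {X : Type*} [DecidableEq X] [Countable X]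
    (P : Set (X → ℝ)) (hP : ∀ p ∈ P, (∀ x, 0 ≤ p x) ∧ ∑' x, p x = 1)
    (f : (X → ℝ) → ℝ)
    (n : ℕ) (hn : 1 ≤ n) (α c ε β : ℝ)
    (hα0 : 0 < α) (hα1 : α < 1 / 2) (hc : 0 < c) (hε : 0 < ε)
    (hβ0 : 0 < β) (hβ1 : β ≤ 1)
    (fhat : (Fin n → X) → ℝ)
    (hprofileBased : ∀ x y : Fin n → X, profile x = profile y → fhat x = fhat y)
    (hbias : ∀ p ∈ P, |(∑' x : Fin n → X, seqProb p x * fhat x) - f p| ≤ ε)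
    (hbd : ∀ (x y : Fin n → X) (j : Fin n), x j ≠ y j → (∀ i, i ≠ j → x i = y i) →
      |fhat x - fhat y| ≤ c * (n : ℝ) ^ α / n)
    (ptil : Multiset ℕ → (X → ℝ))
    (hptil_mem : ∀ x : Fin n → X, ptil (profile x) ∈ P)
    (hptil_max : ∀ x : Fin n → X, ∀ q ∈ P,
      β * profProb n q (profile x) ≤ profProb n (ptil (profile x)) (profile x))
    (hcond : 6 * Real.sqrt n + Real.log 2 ≤ 2 * ε ^ 2 * (n : ℝ) ^ (1 - 2 * α) / c ^ 2)
    (hβ : Real.exp (-Real.sqrt n) ≤ β) :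
    ∀ p ∈ P,
      (∑' x : Fin n → X,
          if 4 * ε < |f p - f (ptil (profile x))| then seqProb p x else 0)
        ≤ Real.exp (-Real.sqrt n) :=
  approx_pml_plugin_sharp_general P hP f n hn α c ε β hc hβ1 fhat hprofileBased hbias hbd ptil
    hptil_mem hptil_max hcond hβ
end

section
/- Let n, m be positive integers with n ≤ m/2, let t = (m − n)/n, let r > 0, and let Z be a Poisson random variable with mean r. Then for every integer i ≥ 1, |1 + (−t)^i · P(Z ≥ i)| ≤ 1 + e^{r(t−1)}. In other words, the maximum coefficient of the smoothed Good–Toulmin support coverage estimator Ŝ_m is at most 1 + e^{r(t−1)}. -/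
/-- The tail probability `P(Z ≥ i)` of a Poisson random variable `Z` with mean `r`. -/
noncomputable def poissonTail (r : ℝ) (i : ℕ) : ℝ :=
  ∑' j : ℕ, if i ≤ j then Real.exp (-r) * r ^ j / (j.factorial : ℝ) else 0

/-!
The bound is Markov's inequality for the probability generating function: for `t ≥ 1` the event
`i ≤ Z` forces `t ^ i ≤ t ^ Z`, so `t ^ i * P(Z ≥ i) ≤ E[t ^ Z] = exp (r * (t - 1))`.
-/

open MeasureTheory ProbabilityTheory
open scoped NNReal Nat

theorem pow_mul_measureReal_le_integral_pow {Ω : Type*} [MeasurableSpace Ω] {μ : Measure Ω}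
    {X : Ω → ℕ} {t : ℝ} (ht : 1 ≤ t) (hint : Integrable (fun ω ↦ t ^ X ω) μ) (i : ℕ) :
    t ^ i * μ.real {ω | i ≤ X ω} ≤ ∫ ω, t ^ X ω ∂μ := by
  have hpow_pos (k : ℕ) : 0 < t ^ k := pow_pos (zero_lt_one.trans_le ht) k
  have hfinite : μ {ω | t ^ i ≤ t ^ X ω} ≠ ⊤ := (hint.measure_ge_lt_top (hpow_pos i)).ne
  calc t ^ i * μ.real {ω | i ≤ X ω}
      ≤ t ^ i * μ.real {ω | t ^ i ≤ t ^ X ω} :=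
        mul_le_mul_of_nonneg_left
          (measureReal_mono (fun _ hω ↦ pow_le_pow_right₀ ht hω) hfinite) (hpow_pos i).le
    _ ≤ ∫ ω, t ^ X ω ∂μ :=
        mul_meas_ge_le_integral_of_nonneg (.of_forall fun ω ↦ (hpow_pos (X ω)).le) hint _

theorem hasSum_poisson_mul_pow (r t : ℝ) :
    HasSum (fun n : ℕ ↦ Real.exp (-r) * r ^ n / n ! * t ^ n) (Real.exp (r * (t - 1))) := by
  have hexp : Real.exp (r * (t - 1)) = Real.exp (-r) * Real.exp (r * t) := by
    rw [← Real.exp_add]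
    ring_nf
  have hterm (n : ℕ) :
      Real.exp (-r) * r ^ n / n ! * t ^ n = Real.exp (-r) * ((r * t) ^ n / n !) := by
    ring
  simp_rw [hexp, hterm, Real.exp_eq_exp_ℝ]
  exact (NormedSpace.expSeries_div_hasSum_exp (r * t)).mul_left _

theorem integrable_pow_poissonMeasure (r : ℝ≥0) (t : ℝ) :
    Integrable (fun n : ℕ ↦ t ^ n) (poissonMeasure r) := by
  simpa only [integrable_poissonMeasure_iff, norm_pow] using
    (hasSum_poisson_mul_pow r ‖t‖).summable

theorem integral_pow_poissonMeasure (r : ℝ≥0) (t : ℝ) :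
    ∫ n, t ^ n ∂poissonMeasure r = Real.exp (r * (t - 1)) :=
  (integral_poissonMeasure r _).trans (hasSum_poisson_mul_pow r t).tsum_eq

theorem poissonTail_eq_measureReal (r : ℝ≥0) (i : ℕ) :
    poissonTail r i = (poissonMeasure r).real {j | i ≤ j} := by
  rw [← integral_indicator_one .of_discrete, integral_poissonMeasure, poissonTail]
  simp [Set.indicator_apply]

theorem poissonTail_nonneg (r : ℝ≥0) (i : ℕ) : 0 ≤ poissonTail r i :=
  poissonTail_eq_measureReal r i ▸ measureReal_nonneg

theorem pow_mul_poissonTail_le_exp (r : ℝ≥0) {t : ℝ} (ht : 1 ≤ t) (i : ℕ) :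
    t ^ i * poissonTail r i ≤ Real.exp (r * (t - 1)) := by
  rw [poissonTail_eq_measureReal, ← integral_pow_poissonMeasure]
  exact pow_mul_measureReal_le_integral_pow ht (integrable_pow_poissonMeasure r t) i

theorem gt_coefficient_bound_general (r : ℝ≥0) {t : ℝ} (ht : 1 ≤ t) (i : ℕ) :
    |1 + (-t) ^ i * poissonTail r i| ≤ 1 + Real.exp (r * (t - 1)) :=
  calc |1 + (-t) ^ i * poissonTail r i|
      ≤ |1| + |(-t) ^ i * poissonTail r i| := abs_add_le _ _
    _ = 1 + t ^ i * poissonTail r i := by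
        rw [abs_one, abs_mul, abs_pow, abs_neg, abs_of_nonneg (zero_le_one.trans ht),
          abs_of_nonneg (poissonTail_nonneg r i)]
    _ ≤ 1 + Real.exp (r * (t - 1)) := by
        gcongr
        exact pow_mul_poissonTail_le_exp r ht i

/-- **Coefficient bound for the smoothed Good–Toulmin estimator.** For `n ≤ m/2`,
`t = (m - n)/n`, `r > 0`, and `Z ~ Poisson(r)`, the coefficient `1 + (-t)^i · P(Z ≥ i)`
of `φ_i` in the smoothed Good–Toulmin support coverage estimator satisfies
`|1 + (-t)^i · P(Z ≥ i)| ≤ 1 + e^{r(t-1)}` for every `i ≥ 1`. -/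
theorem gt_coefficient_bound (n m : ℕ) (hn : 0 < n) (hm : 0 < m)
    (hnm : (n : ℝ) ≤ (m : ℝ) / 2)
    (t : ℝ) (ht : t = ((m : ℝ) - n) / n)
    (r : ℝ) (hr : 0 < r)
    (i : ℕ) (hi : 1 ≤ i) :
    |1 + (-t) ^ i * poissonTail r i| ≤ 1 + Real.exp (r * (t - 1)) := by
  have one_le_t : 1 ≤ t := by
    rw [ht, one_le_div₀ (Nat.cast_pos.mpr hn)]
    linarith
  exact gt_coefficient_bound_general ⟨r, hr.le⟩ one_le_t i
end
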